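/- arXiv:2207.12490 — 3 statements merged into one kernel-verified Lean document; each statement's English description precedes it below -/
import Mathlib

section
/- Let h ∈ K̄[z] be nonzero and let h = q² + ρ be a totally odd part-square decomposition (every nonzero term of ρ has odd degree). Then this decomposition is good; that is, either v(ρ) − v(h) ≥ 2v(2), or there is no part-square decomposition h = q̃² + ρ̃ with v(ρ̃) > v(ρ). -/
open Polynomial

/-- The *Gauss valuation* of a polynomial: the minimum of the valuations of its
coefficients (with value `⊤ = +∞` for the zero polynomial). -/
noncomputable def gaussVal {Kbar : Type*} [Field Kbar]
    (v : AddValuation Kbar (WithTop ℚ)) (h : Kbar[X]) : WithTop ℚ :=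
  h.support.inf fun i => v (h.coeff i)

/-- `h = q² + ρ` is a *part-square decomposition* of `h`:
`deg q ≤ ⌈deg h / 2⌉`, encoded as `2 * deg q ≤ deg h + 1` (`q = 0` is allowed). -/
def IsPSD {Kbar : Type*} [Field Kbar] (h q ρ : Kbar[X]) : Prop :=
  h = q ^ 2 + ρ ∧ 2 * q.natDegree ≤ h.natDegree + 1

/-- A part-square decomposition `h = q² + ρ` is *good* if either `v ρ − v h ≥ 2 v 2`,
or `v ρ − v h < 2 v 2` and no part-square decomposition of `h` has strictly larger
Gauss valuation of its remainder. -/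
def IsGoodPSD {Kbar : Type*} [Field Kbar] (v : AddValuation Kbar (WithTop ℚ))
    (h q ρ : Kbar[X]) : Prop :=
  IsPSD h q ρ ∧
    (gaussVal v h + (v 2 + v 2) ≤ gaussVal v ρ ∨
      (gaussVal v ρ < gaussVal v h + (v 2 + v 2) ∧
        ∀ q' ρ' : Kbar[X], IsPSD h q' ρ' → gaussVal v ρ' ≤ gaussVal v ρ))

theorem le_gaussVal_iff {F : Type*} [Field F] (v : AddValuation F (WithTop ℚ)) (p : F[X])
    (a : WithTop ℚ) : a ≤ gaussVal v p ↔ ∀ i, a ≤ v (p.coeff i) := by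
  unfold gaussVal
  rw [Finset.le_inf_iff]
  constructor
  · intro H i
    by_cases hi : i ∈ p.support
    · exact H i hi
    · rw [Polynomial.notMem_support_iff.1 hi, AddValuation.map_zero]
      exact le_top
  · intro H i _
    exact H i

theorem gaussVal_le {F : Type*} [Field F] (v : AddValuation F (WithTop ℚ)) (p : F[X])
    (i : ℕ) : gaussVal v p ≤ v (p.coeff i) :=
  (le_gaussVal_iff v p _).1 le_rfl i

theorem gaussVal_add {F : Type*} [Field F] (v : AddValuation F (WithTop ℚ)) (p q : F[X]) :
    min (gaussVal v p) (gaussVal v q) ≤ gaussVal v (p + q) := by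
  rw [le_gaussVal_iff]
  intro i
  rw [coeff_add]
  exact (min_le_min (gaussVal_le v p i) (gaussVal_le v q i)).trans (v.map_add _ _)

theorem gaussVal_neg {F : Type*} [Field F] (v : AddValuation F (WithTop ℚ)) (p : F[X]) :
    gaussVal v (-p) = gaussVal v p := by
  apply le_antisymm <;> rw [le_gaussVal_iff] <;> intro i
  · simpa using gaussVal_le v (-p) i
  · simpa using gaussVal_le v p i

theorem gaussVal_mul {F : Type*} [Field F] (v : AddValuation F (WithTop ℚ)) (p q : F[X]) :
    gaussVal v p + gaussVal v q ≤ gaussVal v (p * q) := by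
  rw [le_gaussVal_iff]
  intro i
  rw [coeff_mul]
  apply v.map_le_sum
  intro x _
  rw [v.map_mul]
  exact add_le_add (gaussVal_le v p _) (gaussVal_le v q _)

theorem gaussVal_two_mul {F : Type*} [Field F] (v : AddValuation F (WithTop ℚ)) (q : F[X]) :
    gaussVal v (2 * q) ≥ v 2 + gaussVal v q := by
  rw [ge_iff_le, le_gaussVal_iff]
  intro i
  have : (2 * q).coeff i = 2 * q.coeff i := by
    rw [← coeff_C_mul]; simp
  rw [this, v.map_mul]
  exact add_le_add le_rfl (gaussVal_le v q _)

theorem exists_coeff_sq {F : Type*} [Field F] (v : AddValuation F (WithTop ℚ)) (p : F[X]) :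
    ∃ i, v ((p ^ 2).coeff (2 * i)) = gaussVal v p + gaussVal v p := by
  by_cases hp : p = 0
  · subst hp
    exact ⟨0, by simp [gaussVal]⟩
  have hne : p.support.Nonempty := by simpa using hp
  obtain ⟨j, hj, hjv⟩ := Finset.exists_mem_eq_inf p.support hne (fun i => v (p.coeff i))
  let S := p.support.filter (fun i => v (p.coeff i) = gaussVal v p)
  have hS : S.Nonempty := ⟨j, by simp only [S, Finset.mem_filter]; exact ⟨hj, hjv.symm⟩⟩
  obtain ⟨i, hiS, hmax⟩ := S.exists_max_image id hS
  obtain ⟨hi, hiv⟩ := Finset.mem_filter.1 hiS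
  have htop : gaussVal v p ≠ ⊤ := by
    rw [← hiv]
    intro h0
    exact (Polynomial.mem_support_iff.1 hi) ((v.top_iff).1 h0)
  have hgt : ∀ k, i < k → gaussVal v p < v (p.coeff k) := by
    intro k hk
    refine lt_of_le_of_ne (gaussVal_le v p k) ?_
    intro he
    have hk' : k ∈ S := by
      simp only [S, Finset.mem_filter]
      refine ⟨?_, he.symm⟩
      rw [Polynomial.mem_support_iff]
      intro h0
      rw [h0, v.map_zero] at he
      exact htop he
    have := hmax k hk'
    simp only [id] at this
    omega
  refine ⟨i, ?_⟩
  have hmem : (i, i) ∈ Finset.HasAntidiagonal.antidiagonal (2 * i) := by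
    rw [Finset.HasAntidiagonal.mem_antidiagonal]; omega
  rw [pow_two, coeff_mul, ← Finset.add_sum_erase _ _ hmem]
  have hm : v (p.coeff i * p.coeff i) = gaussVal v p + gaussVal v p := by
    rw [v.map_mul, hiv]
  rw [← hm]
  apply AddValuation.map_add_eq_of_lt_left
  rw [hm]
  apply v.map_lt_sum
  · exact WithTop.add_ne_top.2 ⟨htop, htop⟩
  · rintro ⟨a, b⟩ hab
    rw [Finset.mem_erase, Finset.HasAntidiagonal.mem_antidiagonal] at hab
    obtain ⟨h1, h2⟩ := hab
    rw [v.map_mul]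
    simp only at h2 ⊢
    have h3 : ¬ (a = i ∧ b = i) := by
      rintro ⟨rfl, rfl⟩
      exact h1 rfl
    rcases lt_or_ge i a with ha | ha
    · exact WithTop.add_lt_add_of_lt_of_le htop (hgt a ha) (gaussVal_le v p b)
    · exact WithTop.add_lt_add_of_le_of_lt htop (gaussVal_le v p a) (hgt b (by omega))

theorem odd_not_square {F : Type*} [Field F] (v : AddValuation F (WithTop ℚ)) (p ρ r : F[X])
    (hodd : ∀ i : ℕ, Even i → ρ.coeff i = 0) (hp : p ^ 2 = ρ + r)
    (hlt : gaussVal v ρ < gaussVal v r) : False := by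
  obtain ⟨i, hi⟩ := exists_coeff_sq v p
  rw [hp, coeff_add, hodd _ (even_two_mul i), zero_add] at hi
  have h1 : gaussVal v ρ < gaussVal v p + gaussVal v p := by
    rw [← hi]
    exact hlt.trans_le (gaussVal_le v r _)
  have h2 : gaussVal v ρ < gaussVal v (p * p) := h1.trans_le (gaussVal_mul v p p)
  have h3 := gaussVal_add v (p * p) (-r)
  rw [gaussVal_neg, show p * p + -r = ρ by rw [← pow_two, hp]; ring] at h3
  exact absurd h3 (not_le.2 (lt_min h2 hlt))

/-- A totally odd part-square decomposition `h = q² + ρ` of a nonzero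
polynomial is good: either `v ρ − v h ≥ 2 v 2`, or there is no part-square decomposition
`h = q̃² + ρ̃` with `v ρ̃ > v ρ`. -/
theorem stmt3 {Kbar : Type*} [Field Kbar] [IsAlgClosed Kbar]
    (v : AddValuation Kbar (WithTop ℚ)) (hchar : (2 : Kbar) ≠ 0)
    (h q ρ : Kbar[X]) (hh : h ≠ 0) (hpsd : IsPSD h q ρ)
    (hodd : ∀ i : ℕ, Even i → ρ.coeff i = 0) :
    gaussVal v h + (v 2 + v 2) ≤ gaussVal v ρ ∨
      ∀ q' ρ' : Kbar[X], IsPSD h q' ρ' → gaussVal v ρ' ≤ gaussVal v ρ := by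
  by_contra! hcon
  obtain ⟨hw, q', ρ', ⟨hq', _⟩, hρ'⟩ := hcon
  obtain ⟨hq, _⟩ := hpsd
  have hwtop : gaussVal v ρ ≠ ⊤ := (hw.trans_le le_top).ne
  -- first, `v h ≤ v ρ`
  have hle : gaussVal v h ≤ gaussVal v ρ := by
    by_contra! hlt
    refine odd_not_square v q (-ρ) h (fun i hi => by simp [hodd i hi]) ?_ ?_
    · rw [hq]; ring
    · rwa [gaussVal_neg]
  have hqv : gaussVal v h ≤ gaussVal v q + gaussVal v q := by
    obtain ⟨i, hi⟩ := exists_coeff_sq v q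
    have h3 := gaussVal_add v h (-ρ)
    rw [gaussVal_neg, min_eq_left hle, show h + -ρ = q ^ 2 by rw [hq]; ring] at h3
    rw [← hi]
    exact h3.trans (gaussVal_le v _ _)
  obtain ⟨d, rfl⟩ : ∃ d, q' = q + d := ⟨q' - q, by ring⟩
  have hd : d ^ 2 = ρ + (-(ρ' + 2 * q * d)) := by
    have : q ^ 2 + ρ = (q + d) ^ 2 + ρ' := by rw [← hq, hq']
    linear_combination -this
  rcases lt_or_ge (gaussVal v d) (gaussVal v (2 * q)) with hlt | hge
  · have hdtop : gaussVal v d ≠ ⊤ := (hlt.trans_le le_top).ne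
    have h1 : gaussVal v d + gaussVal v d < gaussVal v (2 * q * d) :=
      (WithTop.add_lt_add_of_lt_of_le hdtop hlt le_rfl).trans_le (gaussVal_mul v _ _)
    have hadd := gaussVal_add v ρ' (2 * q * d)
    have h2 : gaussVal v ρ < gaussVal v (2 * q * d) := by
      by_contra! hc
      obtain ⟨i, hi⟩ := exists_coeff_sq v d
      have h3 := gaussVal_le v (d ^ 2) (2 * i)
      rw [hi, hd] at h3
      have h4 := gaussVal_add v ρ (-(ρ' + 2 * q * d))
      rw [gaussVal_neg] at h4
      have h5 : gaussVal v d + gaussVal v d < gaussVal v ρ := h1.trans_le hc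
      exact absurd (h4.trans h3)
        (not_le.2 (lt_min h5 ((lt_min (h5.trans hρ') h1).trans_le hadd)))
    refine odd_not_square v d ρ _ hodd hd ?_
    rw [gaussVal_neg]
    exact (lt_min hρ' h2).trans_le hadd
  · have h1 : gaussVal v (2 * q) + gaussVal v (2 * q) ≤ gaussVal v (d * (2 * q + d)) := by
      refine le_trans (add_le_add hge ?_) (gaussVal_mul v _ _)
      exact le_trans (le_min le_rfl hge) (gaussVal_add v _ _)
    have h2 : gaussVal v h + (v 2 + v 2) ≤ gaussVal v (d * (2 * q + d)) := by
      refine le_trans ?_ h1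
      refine le_trans ?_ (add_le_add (gaussVal_two_mul v q) (gaussVal_two_mul v q))
      rw [add_add_add_comm, add_comm]
      exact add_le_add le_rfl hqv
    have h3 := gaussVal_add v (d * (2 * q + d)) ρ'
    rw [show d * (2 * q + d) + ρ' = ρ by linear_combination hd] at h3
    exact absurd h3 (not_le.2 (lt_min (hw.trans_le h2) hρ'))
end

section
/- Let h₁, …, h_N ∈ K̄[z] be nonzero polynomials, at most one of which has odd degree, and set h := h₁⋯h_N. For each i let h_i = q_i² + ρ_i be a part-square decomposition with t_i := v(ρ_i) − v(h_i) ≥ 0. Put q := q₁⋯q_N, ρ := h − q², and t := v(ρ) − v(h). Then h = q² + ρ is a part-square decomposition of h, and: (a) t ≥ min{t₁, …, t_N}; (b) if there is an index i₀ with t_{i₀} < t_i for all i ≠ i₀, then t = t_{i₀}, and moreover h = q² + ρ is a good decomposition if and only if h_{i₀} = q_{i₀}² + ρ_{i₀} is a good decomposition. -/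
open Polynomial

/-- The residue field of `v` is algebraically closed, encoded via integral lifts:
every monic polynomial of positive degree with integral coefficients has an integral
root modulo the maximal ideal. -/
def ResidueAlgClosed {Kbar : Type*} [Field Kbar]
    (v : AddValuation Kbar (WithTop ℚ)) : Prop :=
  ∀ p : Kbar[X], p.Monic → 0 < p.natDegree → (∀ i, 0 ≤ v (p.coeff i)) →
    ∃ x : Kbar, 0 ≤ v x ∧ 0 < v (p.eval x)

section Helpers

lemma av_lt_sub {R : Type*} [CommRing R] (w : AddValuation R (WithTop ℚ)) {x y : R}
    {c : WithTop ℚ} (hx : c < w x) (hy : c < w y) : c < w (x - y) :=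
  lt_of_lt_of_le (lt_min hx hy) (w.map_sub x y)

variable {F : Type*} [Field F] (v : AddValuation F (WithTop ℚ))

lemma gv_le_iff (f : F[X]) (c : WithTop ℚ) :
    c ≤ gaussVal v f ↔ ∀ i, c ≤ v (f.coeff i) := by
  unfold gaussVal
  rw [Finset.le_inf_iff]
  constructor
  · intro h i
    by_cases hi : i ∈ f.support
    · exact h i hi
    · rw [notMem_support_iff.1 hi, v.map_zero]; exact le_top
  · intro h i _; exact h i

lemma gv_le_coeff (f : F[X]) (i : ℕ) : gaussVal v f ≤ v (f.coeff i) :=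
  (gv_le_iff v f _).1 le_rfl i

lemma gv_lt_iff (f : F[X]) (c : WithTop ℚ) (hc : c ≠ ⊤) :
    c < gaussVal v f ↔ ∀ i, c < v (f.coeff i) := by
  constructor
  · intro h i; exact lt_of_lt_of_le h (gv_le_coeff v f i)
  · intro h
    unfold gaussVal
    rw [Finset.lt_inf_iff (lt_top_iff_ne_top.2 hc)]
    intro i _; exact h i

lemma gv_zero : gaussVal v (0 : F[X]) = ⊤ := by simp [gaussVal]

lemma gv_exists (f : F[X]) (hf : f ≠ 0) : ∃ i, v (f.coeff i) = gaussVal v f := by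
  obtain ⟨i, _, hi⟩ := Finset.exists_mem_eq_inf f.support (by simpa using hf)
    (fun i => v (f.coeff i))
  exact ⟨i, hi.symm⟩

lemma gv_ne_top (f : F[X]) (hf : f ≠ 0) : gaussVal v f ≠ ⊤ := by
  intro h
  apply hf
  ext i
  have := gv_le_coeff v f i
  rw [h, top_le_iff, v.top_iff] at this
  simpa using this

lemma gv_C (a : F) : gaussVal v (C a) = v a := by
  apply le_antisymm
  · simpa using gv_le_coeff v (C a) 0
  · rw [gv_le_iff]
    intro i
    rw [coeff_C]
    split_ifs
    · exact le_rfl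
    · rw [v.map_zero]; exact le_top

lemma gv_add (f g : F[X]) : min (gaussVal v f) (gaussVal v g) ≤ gaussVal v (f + g) := by
  rw [gv_le_iff]
  intro i
  rw [coeff_add]
  exact le_trans (min_le_min (gv_le_coeff v f i) (gv_le_coeff v g i)) (v.map_add _ _)

lemma gv_mul (f g : F[X]) : gaussVal v (f * g) = gaussVal v f + gaussVal v g := by
  classical
  by_cases hf : f = 0
  · simp [hf, gv_zero]
  by_cases hg : g = 0
  · simp [hg, gv_zero]
  apply le_antisymm
  · have ef := gv_exists v f hf
    have eg := gv_exists v g hg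
    set i := Nat.find ef with hi
    set j := Nat.find eg with hj
    have hvi : v (f.coeff i) = gaussVal v f := Nat.find_spec ef
    have hvj : v (g.coeff j) = gaussVal v g := Nat.find_spec eg
    have mi : ∀ a < i, gaussVal v f < v (f.coeff a) := fun a ha =>
      lt_of_le_of_ne (gv_le_coeff v f a) (fun h => Nat.find_min ef ha h.symm)
    have mj : ∀ a < j, gaussVal v g < v (g.coeff a) := fun a ha =>
      lt_of_le_of_ne (gv_le_coeff v g a) (fun h => Nat.find_min eg ha h.symm)
    by_contra hlt
    rw [not_le] at hlt
    have hft := gv_ne_top v f hf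
    have hgt := gv_ne_top v g hg
    have hc := coeff_mul f g (i + j)
    rw [← Finset.add_sum_erase _ _ (show (i, j) ∈ Finset.HasAntidiagonal.antidiagonal (i + j) by simp)] at hc
    have h1 : gaussVal v f + gaussVal v g < v ((f * g).coeff (i + j)) :=
      lt_of_lt_of_le hlt (gv_le_coeff v _ _)
    have h2 : gaussVal v f + gaussVal v g < v (∑ x ∈ (Finset.HasAntidiagonal.antidiagonal (i + j)).erase (i, j),
        f.coeff x.1 * g.coeff x.2) := by
      apply v.map_lt_sum (by simp [hft, hgt])
      rintro ⟨a, b⟩ hab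
      simp only [Finset.mem_erase, ne_eq, Prod.mk.injEq, Finset.HasAntidiagonal.mem_antidiagonal] at hab
      rw [v.map_mul]
      rcases lt_or_ge a i with ha | ha
      · exact WithTop.add_lt_add_of_lt_of_le hgt (mi a ha) (gv_le_coeff v g b)
      · have hb : b < j := by
          by_contra hb
          apply hab.1; constructor <;> omega
        exact WithTop.add_lt_add_of_le_of_lt hft (gv_le_coeff v f a) (mj b hb)
    have h3 : f.coeff i * g.coeff j = (f * g).coeff (i + j) -
        ∑ x ∈ (Finset.HasAntidiagonal.antidiagonal (i + j)).erase (i, j), f.coeff x.1 * g.coeff x.2 := by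
      rw [hc]; ring
    have h4 := av_lt_sub v h1 h2
    rw [← h3, v.map_mul, hvi, hvj] at h4
    exact lt_irrefl _ h4
  · rw [gv_le_iff]
    intro n
    rw [coeff_mul]
    apply v.map_le_sum
    rintro ⟨a, b⟩ _
    rw [v.map_mul]
    exact add_le_add (gv_le_coeff v f a) (gv_le_coeff v g b)

/-- The Gauss valuation as an additive valuation. -/
noncomputable def gaussV : AddValuation F[X] (WithTop ℚ) :=
  AddValuation.of (gaussVal v) (gv_zero v)
    (by rw [← C_1, gv_C, v.map_one]) (gv_add v) (gv_mul v)

lemma gaussV_eq (f : F[X]) : gaussVal v f = gaussV v f := rfl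

lemma gaussV_ne_top (f : F[X]) (hf : f ≠ 0) : gaussV v f ≠ ⊤ := gv_ne_top v f hf

lemma gaussV_C (a : F) : gaussV v (C a) = v a := gv_C v a

lemma gaussV_two : gaussV v 2 = v 2 := gaussV_C v 2

lemma v_nat_nonneg (n : ℕ) : 0 ≤ v (n : F) := by
  induction n with
  | zero => simp
  | succ n ih =>
    rw [Nat.cast_succ]
    exact v.map_le_add ih (by rw [v.map_one])

lemma v_odd (h2 : 0 < v 2) (n : ℕ) : v ((2 * n + 1 : ℕ) : F) = 0 := by
  have h : v (1 : F) < v ((2 * n : ℕ) : F) := by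
    rw [v.map_one]; push_cast; rw [v.map_mul]
    exact add_pos_of_pos_of_nonneg h2 (v_nat_nonneg v n)
  have := v.map_add_eq_of_lt_left h
  rw [v.map_one] at this
  rw [← this]; push_cast; rw [add_comm]

lemma gaussV_deriv (f : F[X]) : gaussV v f ≤ gaussV v (derivative f) := by
  rw [← gaussV_eq, ← gaussV_eq, gv_le_iff]
  intro i
  rw [coeff_derivative, v.map_mul]
  have := v_nat_nonneg v (i + 1)
  push_cast at this
  exact le_trans (gv_le_coeff v f (i + 1)) (le_add_of_nonneg_right this)

lemma gaussV_X : gaussV v X = 0 := by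
  rw [← gaussV_eq]
  apply le_antisymm
  · simpa using gv_le_coeff v (X : F[X]) 1
  · rw [gv_le_iff]
    intro i
    rw [coeff_X]
    split_ifs <;> simp

/-- Approximate square roots. -/
lemma approx_sqrt [IsAlgClosed F] (h2 : 0 < v 2) (c : ℚ) (n : ℕ) :
    ∀ f : F[X], f.natDegree ≤ 2 * n + 1 → (∀ i, (c : WithTop ℚ) ≤ v (f.coeff i)) →
      (∀ i, (c : WithTop ℚ) < v (f.coeff (2 * i + 1))) →
      ∃ s : F[X], s.natDegree ≤ n ∧ (((c / 2 : ℚ)) : WithTop ℚ) ≤ gaussV v s ∧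
        (c : WithTop ℚ) < gaussV v (f - s ^ 2) := by
  have key : ∀ a : F, (c : WithTop ℚ) ≤ v a → ∃ r : F, r ^ 2 = a ∧
      (((c / 2 : ℚ)) : WithTop ℚ) ≤ v r := by
    intro a ha
    obtain ⟨r, hr⟩ := IsAlgClosed.exists_pow_nat_eq a (n := 2) (by norm_num)
    refine ⟨r, hr, ?_⟩
    rw [← hr, pow_two, v.map_mul] at ha
    generalize v r = x at *
    induction x with
    | top => exact le_top
    | coe x =>
      norm_cast at *
      linarith
  induction n with
  | zero =>
    intro f hd hc ho
    obtain ⟨r, hr, hvr⟩ := key (f.coeff 0) (hc 0)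
    refine ⟨C r, by simp, by rwa [gaussV_C], ?_⟩
    have hf : f - C r ^ 2 = C (f.coeff 1) * X := by
      conv_lhs => rw [eq_X_add_C_of_natDegree_le_one (p := f) (by simpa using hd)]
      rw [← C_pow, hr]; simp
    rw [hf, (gaussV v).map_mul, gaussV_C, gaussV_X, add_zero]
    exact ho 0
  | succ n ih =>
    intro f hd hc ho
    obtain ⟨r, hr, hvr⟩ := key (f.coeff 0) (hc 0)
    obtain ⟨s, hs1, hs2, hs3⟩ := ih f.divX.divX
      (by rw [natDegree_divX_eq_natDegree_tsub_one, natDegree_divX_eq_natDegree_tsub_one]; omega)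
      (fun i => by simpa [coeff_divX] using hc (i + 2))
      (fun i => by
        have := ho (i + 1)
        rw [coeff_divX, coeff_divX]
        exact this)
    refine ⟨C r + X * s, ?_, ?_, ?_⟩
    · refine le_trans (natDegree_add_le _ _) (max_le (by simp) ?_)
      refine le_trans natDegree_mul_le ?_
      rw [natDegree_X]; omega
    · apply (gaussV v).map_le_add
      · rwa [gaussV_C]
      · rwa [(gaussV v).map_mul, gaussV_X, zero_add]
    · have e1 := divX_mul_X_add f
      have e2 := divX_mul_X_add f.divX
      rw [coeff_divX] at e2
      have hf : f - (C r + X * s) ^ 2 = C (f.coeff 1) * X + X * X * (f.divX.divX - s ^ 2)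
          - 2 * C r * X * s := by
        have e3 : C (f.coeff 0) = C r ^ 2 := by rw [← C_pow, hr]
        rw [e3] at e1
        simp only [zero_add] at e2
        linear_combination -e1 - X * e2
      rw [hf]
      apply av_lt_sub (gaussV v)
      · apply (gaussV v).map_lt_add
        · rw [(gaussV v).map_mul, gaussV_C, gaussV_X, add_zero]
          exact ho 0
        · simpa [(gaussV v).map_mul, gaussV_X] using hs3
      · simp only [(gaussV v).map_mul, gaussV_C, gaussV_X, gaussV_two, add_zero]
        revert h2 hvr hs2
        generalize v 2 = x
        generalize v r = y
        generalize gaussV v s = z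
        intro h2 hvr hs2
        induction x with
        | top => simp
        | coe x =>
        induction y with
        | top => simp
        | coe y =>
        induction z with
        | top => simp
        | coe z =>
          norm_cast at *
          linarith

lemma better_to_deriv (h q ρ q1 ρ1 : F[X]) (a r : ℚ) (hh : gaussV v h = a)
    (hr : gaussV v ρ = r) (hpos : a ≤ r)
    (hlt : (r : WithTop ℚ) < a + (v 2 + v 2)) (e : h = q ^ 2 + ρ) (e1 : h = q1 ^ 2 + ρ1)
    (hb : (r : WithTop ℚ) < gaussV v ρ1) : (r : WithTop ℚ) < gaussV v (derivative ρ) := by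
  obtain ⟨w, hw⟩ : ∃ w, w = q1 - q := ⟨_, rfl⟩
  have hq1 : q1 = w + q := by rw [hw]; ring
  have hρ : ρ = ρ1 + w * w + 2 * (q * w) := by
    rw [hq1] at e1; linear_combination e1 - e
  have hq : (a : WithTop ℚ) ≤ gaussV v q + gaussV v q := by
    rw [← (gaussV v).map_mul]
    have : q * q = h - ρ := by rw [e]; ring
    rw [this]
    apply (gaussV v).map_le_sub
    · rw [hh]
    · rw [hr]; exact_mod_cast hpos
  have hww : (r : WithTop ℚ) ≤ gaussV v w + gaussV v w := by
    by_contra hcon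
    rw [not_le] at hcon
    have hx : gaussV v w < gaussV v (2 * q) := by
      rw [(gaussV v).map_mul, gaussV_two]
      revert hcon hq hlt
      generalize v 2 = x
      generalize gaussV v w = y
      generalize gaussV v q = z
      intro hlt hq hcon
      induction y with
      | top => simp at hcon
      | coe y =>
      induction x with
      | top => simp
      | coe x =>
      induction z with
      | top => simp
      | coe z =>
        norm_cast at *
        linarith
    have h3 := (gaussV v).map_add_eq_of_lt_left hx
    have h4 : gaussV v (w * (w + 2 * q)) = gaussV v w + gaussV v w := by
      rw [(gaussV v).map_mul, h3]
    have h5 : w * (w + 2 * q) = ρ - ρ1 := by rw [hρ]; ring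
    have h6 : (r : WithTop ℚ) ≤ gaussV v (w * (w + 2 * q)) := by
      rw [h5]
      exact (gaussV v).map_le_sub hr.ge hb.le
    rw [h4] at h6
    exact absurd h6 (not_le.2 hcon)
  have hd : derivative ρ = derivative ρ1 + 2 * (w * derivative w) + 2 * derivative (q * w) := by
    have : derivative (2 * (q * w)) = 2 * derivative (q * w) := by
      rw [derivative_mul]; simp
    conv_lhs => rw [hρ]
    rw [derivative_add, derivative_add, this, derivative_mul (f := w) (g := w)]; ring
  rw [hd]
  have hdw := gaussV_deriv v w
  have hdqw := gaussV_deriv v (q * w)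
  rw [(gaussV v).map_mul] at hdqw
  apply (gaussV v).map_lt_add
  · apply (gaussV v).map_lt_add
    · exact lt_of_lt_of_le hb (gaussV_deriv v ρ1)
    · rw [(gaussV v).map_mul, (gaussV v).map_mul, gaussV_two]
      refine lt_of_lt_of_le ?_ (add_le_add_right (add_le_add_right hdw _) _)
      revert hww hlt
      generalize v 2 = x
      generalize gaussV v w = y
      intro hlt hww
      induction y with
      | top => simp
      | coe y =>
      induction x with
      | top => simp
      | coe x =>
        norm_cast at *
        linarith
  · rw [(gaussV v).map_mul, gaussV_two]
    refine lt_of_lt_of_le ?_ (add_le_add_right hdqw _)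
    revert hww hq hlt
    generalize v 2 = x
    generalize gaussV v w = y
    generalize gaussV v q = z
    intro hlt hq hww
    induction y with
    | top => simp
    | coe y =>
    induction x with
    | top => simp
    | coe x =>
    induction z with
    | top => simp
    | coe z =>
      norm_cast at *
      linarith

lemma two_pos_of (a r : ℚ) (hpos : a ≤ r)
    (hlt : (r : WithTop ℚ) < a + (v 2 + v 2)) : 0 < v 2 := by
  revert hlt
  generalize v 2 = x
  intro hlt
  induction x with
  | top => simp
  | coe x =>
    norm_cast at *
    linarith

lemma deriv_to_better [IsAlgClosed F] (h q ρ : F[X]) (a r : ℚ) (hh : gaussV v h = a)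
    (hr : gaussV v ρ = r) (hpos : a ≤ r)
    (hlt : (r : WithTop ℚ) < a + (v 2 + v 2)) (e : IsPSD h q ρ)
    (hb : (r : WithTop ℚ) < gaussV v (derivative ρ)) :
    ∃ q1 ρ1, IsPSD h q1 ρ1 ∧ (r : WithTop ℚ) < gaussV v ρ1 := by
  have h2 := two_pos_of v a r hpos hlt
  have hq : (a : WithTop ℚ) ≤ gaussV v q + gaussV v q := by
    rw [← (gaussV v).map_mul]
    have : q * q = h - ρ := by rw [e.1]; ring
    rw [this]
    apply (gaussV v).map_le_sub
    · rw [hh]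
    · rw [hr]; exact_mod_cast hpos
  obtain ⟨s, hs1, hs2, hs3⟩ := approx_sqrt v h2 r (ρ.natDegree / 2) ρ (by omega)
    (fun i => by rw [← hr]; exact gv_le_coeff v ρ i)
    (fun i => by
      have := lt_of_lt_of_le hb (gv_le_coeff v (derivative ρ) (2 * i))
      rw [coeff_derivative, v.map_mul] at this
      have ho := v_odd v h2 i
      push_cast at ho this
      rwa [ho, add_zero] at this)
  have hρd : ρ.natDegree ≤ h.natDegree + 1 := by
    have : ρ = h - q ^ 2 := by rw [e.1]; ring
    rw [this]
    refine le_trans (natDegree_sub_le _ _) (max_le (by omega) ?_)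
    refine le_trans natDegree_pow_le e.2
  refine ⟨q + s, ρ - s ^ 2 - 2 * (q * s), ⟨?_, ?_⟩, ?_⟩
  · rw [e.1]; ring
  · have := natDegree_add_le q s
    have := e.2
    rcases max_cases q.natDegree s.natDegree with h | h <;> omega
  · apply av_lt_sub (gaussV v) hs3
    rw [(gaussV v).map_mul, (gaussV v).map_mul, gaussV_two]
    revert hs2 hq hlt
    generalize v 2 = x
    generalize gaussV v s = y
    generalize gaussV v q = z
    intro hlt hq hs2
    induction y with
    | top => simp
    | coe y =>
    induction x with
    | top => simp
    | coe x =>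
    induction z with
    | top => simp
    | coe z =>
      norm_cast at *
      linarith

lemma prod_ge {ι : Type*} (S : Finset ι) (hs qs ρs : ι → F[X]) (c : WithTop ℚ) (hc : 0 ≤ c)
    (e : ∀ i ∈ S, hs i = qs i ^ 2 + ρs i)
    (hb : ∀ i ∈ S, c + gaussV v (hs i) ≤ gaussV v (ρs i)) :
    c + gaussV v (∏ i ∈ S, hs i) ≤ gaussV v (∏ i ∈ S, hs i - (∏ i ∈ S, qs i) ^ 2) := by
  classical
  induction S using Finset.induction_on with
  | empty => simp
  | insert i S hi ih =>
    have ih' := ih (fun j hj => e j (Finset.mem_insert_of_mem hj))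
      (fun j hj => hb j (Finset.mem_insert_of_mem hj))
    have ei := e i (Finset.mem_insert_self i S)
    have hbi := hb i (Finset.mem_insert_self i S)
    rw [Finset.prod_insert hi, Finset.prod_insert hi]
    generalize ∏ i ∈ S, hs i = H at *
    generalize ∏ i ∈ S, qs i = Q at *
    have : hs i * H - (qs i * Q) ^ 2 = ρs i * H + (hs i - ρs i) * (H - Q ^ 2) := by
      rw [ei]; ring
    rw [this, (gaussV v).map_mul]
    have hle : gaussV v (hs i) ≤ gaussV v (ρs i) := le_trans (le_add_of_nonneg_left hc) hbi
    apply (gaussV v).map_le_add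
    · rw [(gaussV v).map_mul, ← add_assoc]
      exact add_le_add_left hbi _
    · rw [(gaussV v).map_mul, add_left_comm]
      exact add_le_add ((gaussV v).map_le_sub le_rfl hle) ih'

lemma prod_gt {ι : Type*} (S : Finset ι) (hs qs ρs : ι → F[X]) (c : ℚ) (hc : 0 ≤ c)
    (hne : ∀ i ∈ S, hs i ≠ 0)
    (e : ∀ i ∈ S, hs i = qs i ^ 2 + ρs i)
    (hb : ∀ i ∈ S, (c : WithTop ℚ) + gaussV v (hs i) < gaussV v (ρs i)) :
    (c : WithTop ℚ) + gaussV v (∏ i ∈ S, hs i) <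
      gaussV v (∏ i ∈ S, hs i - (∏ i ∈ S, qs i) ^ 2) := by
  classical
  induction S using Finset.induction_on with
  | empty => simp
  | insert i S hi ih =>
    have ih' := ih (fun j hj => hne j (Finset.mem_insert_of_mem hj))
      (fun j hj => e j (Finset.mem_insert_of_mem hj))
      (fun j hj => hb j (Finset.mem_insert_of_mem hj))
    have ei := e i (Finset.mem_insert_self i S)
    have hbi := hb i (Finset.mem_insert_self i S)
    have h1 := gaussV_ne_top v _ (hne i (Finset.mem_insert_self i S))
    have h2 := gaussV_ne_top v (∏ i ∈ S, hs i)
      (Finset.prod_ne_zero_iff.2 fun j hj => hne j (Finset.mem_insert_of_mem hj))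
    rw [Finset.prod_insert hi, Finset.prod_insert hi]
    generalize ∏ i ∈ S, hs i = H at *
    generalize ∏ i ∈ S, qs i = Q at *
    have : hs i * H - (qs i * Q) ^ 2 = ρs i * H + (hs i - ρs i) * (H - Q ^ 2) := by
      rw [ei]; ring
    rw [this, (gaussV v).map_mul]
    have hle : gaussV v (hs i) ≤ gaussV v (ρs i) :=
      le_trans (le_add_of_nonneg_left (by exact_mod_cast hc)) hbi.le
    apply (gaussV v).map_lt_add
    · rw [(gaussV v).map_mul, ← add_assoc]
      exact WithTop.add_lt_add_right h2 hbi
    · rw [(gaussV v).map_mul, add_left_comm]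
      exact WithTop.add_lt_add_of_le_of_lt h1 ((gaussV v).map_le_sub le_rfl hle) ih'

/-- Two-factor remainder estimate. -/
lemma two_gt (h0 q0 ρ0 h' q' ρ' : F[X]) (a b c : ℚ) (hc : 0 ≤ c)
    (ha : gaussV v h0 = a) (hb : gaussV v h' = b)
    (e0 : h0 = q0 ^ 2 + ρ0) (e' : h' = q' ^ 2 + ρ')
    (h1 : ((c + a : ℚ) : WithTop ℚ) < gaussV v ρ0)
    (h2 : ((c + b : ℚ) : WithTop ℚ) < gaussV v ρ') :
    ((c + a + b : ℚ) : WithTop ℚ) < gaussV v (h0 * h' - (q0 * q') ^ 2) := by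
  have : h0 * h' - (q0 * q') ^ 2 = ρ0 * h' + (h0 - ρ0) * ρ' := by
    rw [e0, e']; ring
  rw [this]
  apply (gaussV v).map_lt_add
  · rw [(gaussV v).map_mul, hb, WithTop.coe_add]
    exact WithTop.add_lt_add_right WithTop.coe_ne_top h1
  · have h3 : (a : WithTop ℚ) ≤ gaussV v (h0 - ρ0) := by
      apply (gaussV v).map_le_sub ha.ge
      refine le_trans ?_ h1.le
      norm_cast; linarith
    rw [(gaussV v).map_mul, show c + a + b = a + (c + b) by ring, WithTop.coe_add]
    exact WithTop.add_lt_add_of_le_of_lt WithTop.coe_ne_top h3 h2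

lemma two_factor [IsAlgClosed F] (h0 q0 ρ0 h' q' ρ' h q ρ : F[X]) (a b c : ℚ) (hc : 0 ≤ c)
    (ha : gaussV v h0 = a) (hb : gaussV v h' = b) (hr : gaussV v ρ0 = (c + a : ℚ))
    (eh : h = h0 * h') (eq : q = q0 * q') (eρ : ρ = h - q ^ 2)
    (p0 : IsPSD h0 q0 ρ0) (p : IsPSD h q ρ) (e' : h' = q' ^ 2 + ρ')
    (hdeg : ∀ q1 : F[X], 2 * q1.natDegree ≤ h0.natDegree + 1 →
      2 * (q1 * q').natDegree ≤ h.natDegree + 1)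
    (h2 : ((c + b : ℚ) : WithTop ℚ) < gaussV v ρ') :
    gaussV v ρ = (c + a + b : ℚ) ∧ (IsGoodPSD v h q ρ ↔ IsGoodPSD v h0 q0 ρ0) := by
  have hρ : ρ = ρ0 * h' + (h0 - ρ0) * ρ' := by
    rw [eρ, eh, eq, p0.1, e']; ring
  have h3 : (a : WithTop ℚ) ≤ gaussV v (h0 - ρ0) := by
    apply (gaussV v).map_le_sub ha.ge
    rw [hr]; norm_cast; linarith
  have hA : gaussV v (ρ0 * h') = (c + a + b : ℚ) := by
    rw [(gaussV v).map_mul, hb, hr, ← WithTop.coe_add]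
  have hB : ((c + a + b : ℚ) : WithTop ℚ) < gaussV v ((h0 - ρ0) * ρ') := by
    rw [(gaussV v).map_mul, show c + a + b = a + (c + b) by ring, WithTop.coe_add]
    exact WithTop.add_lt_add_of_le_of_lt WithTop.coe_ne_top h3 h2
  have hρv : gaussV v ρ = (c + a + b : ℚ) := by
    rw [← hA, hρ]
    rw [← hA] at hB
    exact (gaussV v).map_add_eq_of_lt_left hB
  have hh : gaussV v h = (a + b : ℚ) := by
    rw [eh, (gaussV v).map_mul, ha, hb, WithTop.coe_add]
  refine ⟨hρv, ?_⟩
  have hiff : ((a + b : ℚ) : WithTop ℚ) + (v 2 + v 2) ≤ (c + a + b : ℚ) ↔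
      ((a : ℚ) : WithTop ℚ) + (v 2 + v 2) ≤ (c + a : ℚ) := by
    generalize v 2 = x
    induction x with
    | top => simp
    | coe x =>
      norm_cast
      constructor <;> intro _ <;> linarith
  unfold IsGoodPSD
  simp only [gaussV_eq, hρv, hh, ha, hr]
  by_cases hbig : ((a + b : ℚ) : WithTop ℚ) + (v 2 + v 2) ≤ (c + a + b : ℚ)
  · have hbig' := hiff.1 hbig
    exact ⟨fun _ => ⟨p0, Or.inl hbig'⟩, fun _ => ⟨p, Or.inl hbig⟩⟩
  have hbig' : ¬ _ := fun hx => hbig (hiff.2 hx)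
  have hs := not_le.1 hbig
  have hs' := not_le.1 hbig'
  have h2pos := two_pos_of v a (c + a) (by linarith) hs'
  constructor
  · rintro ⟨_, hx | ⟨_, hx⟩⟩
    · exact absurd hx hbig
    refine ⟨p0, Or.inr ⟨hs', ?_⟩⟩
    intro q1 ρ1 p1
    by_contra hcon
    rw [not_le] at hcon
    have := two_gt v h0 q1 ρ1 h' q' ρ' a b c hc ha hb p1.1 e' hcon h2
    refine absurd (hx (q1 * q') (h - (q1 * q') ^ 2) ⟨by ring, hdeg q1 p1.2⟩) (not_le.2 ?_)
    rw [eh]; exact this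
  · rintro ⟨_, hx | ⟨_, hx⟩⟩
    · exact absurd hx hbig'
    refine ⟨p, Or.inr ⟨hs, ?_⟩⟩
    intro q1 ρ1 p1
    by_contra hcon
    rw [not_le] at hcon
    have hD := better_to_deriv v h q ρ q1 ρ1 (a + b) (c + a + b) hh hρv (by linarith) hs p.1
      p1.1 hcon
    have hDh' : (b : WithTop ℚ) < gaussV v (derivative h') := by
      have hbρ : (b : WithTop ℚ) < gaussV v ρ' := by
        refine lt_of_le_of_lt ?_ h2
        norm_cast; linarith
      have hq' : (b : WithTop ℚ) ≤ gaussV v q' + gaussV v q' := by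
        rw [← (gaussV v).map_mul, show q' * q' = h' - ρ' by rw [e']; ring]
        exact (gaussV v).map_le_sub hb.ge hbρ.le
      have hd : derivative h' = 2 * (q' * derivative q') + derivative ρ' := by
        conv_lhs => rw [e', pow_two]
        rw [derivative_add, derivative_mul]; ring
      rw [hd]
      apply (gaussV v).map_lt_add
      · rw [(gaussV v).map_mul, (gaussV v).map_mul, gaussV_two]
        have := le_trans hq' (add_le_add_right (gaussV_deriv v q') _)
        refine lt_of_lt_of_le ?_ (add_le_add_right this _)
        have := WithTop.add_lt_add_right (WithTop.coe_ne_top (a := b)) h2pos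
        rwa [zero_add] at this
      · exact lt_of_lt_of_le hbρ (gaussV_deriv v ρ')
    have hD0 : ((c + a + b : ℚ) : WithTop ℚ) < gaussV v (derivative ρ0 * h') := by
      have hd : derivative ρ0 * h' = derivative ρ - derivative ((h0 - ρ0) * ρ')
          - ρ0 * derivative h' := by
        conv_rhs => rw [hρ]
        rw [derivative_add, derivative_mul (f := ρ0)]; ring
      rw [hd]
      apply av_lt_sub (gaussV v)
      · exact av_lt_sub (gaussV v) hD (lt_of_lt_of_le hB (gaussV_deriv v _))
      · rw [(gaussV v).map_mul, hr, WithTop.coe_add (c + a) b]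
        exact WithTop.add_lt_add_left WithTop.coe_ne_top hDh'
    rw [(gaussV v).map_mul, hb, WithTop.coe_add (c + a) b] at hD0
    have hD1 := lt_of_add_lt_add_right hD0
    obtain ⟨q2, ρ2, p2, hb2⟩ := deriv_to_better v h0 q0 ρ0 a (c + a) ha hr (by linarith) hs' p0 hD1
    exact absurd (hx q2 ρ2 p2) (not_le.2 hb2)

lemma prod_deg {ι : Type*} (S : Finset ι) (hs qs : ι → F[X])
    (hne : ∀ i ∈ S, hs i ≠ 0)
    (hd : ∀ i ∈ S, 2 * (qs i).natDegree ≤ (hs i).natDegree + 1)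
    (ho : ∀ i ∈ S, ∀ j ∈ S, Odd (hs i).natDegree → Odd (hs j).natDegree → i = j) :
    2 * (∏ i ∈ S, qs i).natDegree ≤ (∏ i ∈ S, hs i).natDegree + 1 := by
  classical
  have h1 := natDegree_prod_le S qs
  rw [natDegree_prod S hs hne]
  by_cases hex : ∃ i ∈ S, Odd (hs i).natDegree
  · obtain ⟨i, hi, hio⟩ := hex
    rw [← Finset.add_sum_erase _ _ hi]
    have h3 := Finset.add_sum_erase S (fun i => (qs i).natDegree) hi
    have h2 : ∑ j ∈ S.erase i, 2 * (qs j).natDegree ≤ ∑ j ∈ S.erase i, (hs j).natDegree := by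
      apply Finset.sum_le_sum
      intro j hj
      rw [Finset.mem_erase] at hj
      have : ¬ Odd (hs j).natDegree := fun hjo => hj.1 (ho j hj.2 i hi hjo hio)
      rw [Nat.not_odd_iff_even] at this
      obtain ⟨m, hm⟩ := this
      have := hd j hj.2
      omega
    rw [← Finset.mul_sum] at h2
    have := hd i hi
    omega
  · have h2 : ∑ j ∈ S, 2 * (qs j).natDegree ≤ ∑ j ∈ S, (hs j).natDegree := by
      apply Finset.sum_le_sum
      intro j hj
      have : ¬ Odd (hs j).natDegree := fun hjo => hex ⟨j, hj, hjo⟩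
      rw [Nat.not_odd_iff_even] at this
      obtain ⟨m, hm⟩ := this
      have := hd j hj
      omega
    rw [← Finset.mul_sum] at h2
    omega

end Helpers

/-- Products of part-square decompositions: with `h := ∏ hᵢ`,
`q := ∏ qᵢ` and `ρ := h − q²`, where the `hᵢ` are nonzero, at most one has odd degree,
and each decomposition `hᵢ = qᵢ² + ρᵢ` has `tᵢ := v ρᵢ − v hᵢ ≥ 0`, the pair `(q, ρ)` is
a part-square decomposition of `h` with (a) `t := v ρ − v h ≥ min tᵢ`, and (b) if the
minimum is attained at a unique index `i₀`, then `t = t_{i₀}` and the decomposition of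
`h` is good iff that of `h_{i₀}` is (differences of valuations are encoded by
cross-addition). -/
theorem stmt4 {Kbar : Type*} [Field Kbar] [IsAlgClosed Kbar]
    (v : AddValuation Kbar (WithTop ℚ)) (hchar : (2 : Kbar) ≠ 0)
    (hres : ResidueAlgClosed v)
    (N : ℕ) (hN : 0 < N) (hs qs ρs : Fin N → Kbar[X])
    (hne : ∀ i, hs i ≠ 0)
    (hoddone : ∀ i j, Odd (hs i).natDegree → Odd (hs j).natDegree → i = j)
    (hdec : ∀ i, IsPSD (hs i) (qs i) (ρs i))
    (htnn : ∀ i, gaussVal v (hs i) ≤ gaussVal v (ρs i)) :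
    ∀ h q ρ : Kbar[X], h = ∏ i, hs i → q = ∏ i, qs i → ρ = h - q ^ 2 →
      IsPSD h q ρ ∧
      (∃ i, gaussVal v (ρs i) + gaussVal v h ≤ gaussVal v ρ + gaussVal v (hs i)) ∧
      ∀ i₀ : Fin N,
        (∀ i, i ≠ i₀ →
          gaussVal v (ρs i₀) + gaussVal v (hs i) <
            gaussVal v (ρs i) + gaussVal v (hs i₀)) →
        gaussVal v ρ + gaussVal v (hs i₀) = gaussVal v (ρs i₀) + gaussVal v h ∧
        (IsGoodPSD v h q ρ ↔ IsGoodPSD v (hs i₀) (qs i₀) (ρs i₀)) := by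
  classical
  intro h q ρ eh eq eρ
  have p : IsPSD h q ρ := by
    refine ⟨by rw [eρ]; ring, ?_⟩
    rw [eh, eq]
    exact prod_deg Finset.univ hs qs (fun i _ => hne i) (fun i _ => (hdec i).2)
      (fun i _ j _ => hoddone i j)
  refine ⟨p, ?_, ?_⟩
  · simp only [gaussV_eq] at *
    have hfin : ∀ i, ∃ a : ℚ, gaussV v (hs i) = a := fun i => by
      obtain ⟨a, ha⟩ := WithTop.ne_top_iff_exists.1 (gaussV_ne_top v _ (hne i))
      exact ⟨a, ha.symm⟩
    choose a ha using hfin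
    have : Nonempty (Fin N) := ⟨⟨0, hN⟩⟩
    obtain ⟨i, hi⟩ := Finite.exists_min
      (fun i => gaussV v (ρs i) + ((-a i : ℚ) : WithTop ℚ))
    have hcancel : ∀ j, gaussV v (ρs j) + ((-a j : ℚ) : WithTop ℚ) + (a j : ℚ)
        = gaussV v (ρs j) := fun j => by
      rw [add_assoc, ← WithTop.coe_add]; simp
    refine ⟨i, ?_⟩
    have hc : 0 ≤ gaussV v (ρs i) + ((-a i : ℚ) : WithTop ℚ) := by
      have := add_le_add_left (htnn i) ((-a i : ℚ) : WithTop ℚ)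
      rw [ha i, ← WithTop.coe_add] at this
      simpa using this
    have := prod_ge v Finset.univ hs qs ρs _ hc (fun i _ => (hdec i).1) (fun j _ => by
      have := add_le_add_left (hi j) (a j : WithTop ℚ)
      rw [hcancel j] at this
      rw [ha j]; exact this)
    rw [← eh, ← eq, ← eρ] at this
    have := add_le_add_left this (a i : WithTop ℚ)
    rw [add_right_comm, hcancel i] at this
    rw [ha i]; exact this
  · intro i₀ hmin
    simp only [gaussV_eq] at *
    by_cases hz : ρs i₀ = 0
    · have huniq : ∀ i, i = i₀ := by
        intro i
        by_contra hi
        have := hmin i hi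
        rw [hz, (gaussV v).map_zero, top_add] at this
        exact absurd this not_top_lt
      have hu : (Finset.univ : Finset (Fin N)) = {i₀} := by
        ext i; simp [huniq i]
      rw [hu, Finset.prod_singleton] at eh eq
      have : ρ = ρs i₀ := by rw [eρ, eh, eq, (hdec i₀).1]; ring
      subst eh eq
      rw [this]
      exact ⟨rfl, Iff.rfl⟩
    obtain ⟨r, hr⟩ := WithTop.ne_top_iff_exists.1 (gaussV_ne_top v _ hz)
    obtain ⟨a, ha⟩ := WithTop.ne_top_iff_exists.1 (gaussV_ne_top v _ (hne i₀))
    set S := Finset.univ.erase i₀ with hS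
    have hSne : ∏ i ∈ S, hs i ≠ 0 := Finset.prod_ne_zero_iff.2 fun i _ => hne i
    obtain ⟨b, hb⟩ := WithTop.ne_top_iff_exists.1 (gaussV_ne_top v _ hSne)
    have eh' : h = hs i₀ * ∏ i ∈ S, hs i := by
      rw [eh, hS, Finset.mul_prod_erase _ _ (Finset.mem_univ i₀)]
    have eq' : q = qs i₀ * ∏ i ∈ S, qs i := by
      rw [eq, hS, Finset.mul_prod_erase _ _ (Finset.mem_univ i₀)]
    have hc : 0 ≤ r - a := by
      have := htnn i₀
      rw [← hr, ← ha] at this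
      norm_cast at this
      linarith
    have hgt := prod_gt v S hs qs ρs (r - a) hc (fun i _ => hne i) (fun i _ => (hdec i).1)
      (fun i hi => by
        have h1 := hmin i (Finset.ne_of_mem_erase hi)
        rw [← hr, ← ha] at h1
        obtain ⟨x, hx⟩ := WithTop.ne_top_iff_exists.1 (gaussV_ne_top v _ (hne i))
        rw [← hx] at h1 ⊢
        generalize gaussV v (ρs i) = y at *
        induction y with
        | top => rw [← WithTop.coe_add]; exact WithTop.coe_lt_top _
        | coe y =>
          norm_cast at *
          linarith)
    rw [← hb, ← WithTop.coe_add] at hgt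
    have hdeg : ∀ q1 : Kbar[X], 2 * q1.natDegree ≤ (hs i₀).natDegree + 1 →
        2 * (q1 * ∏ i ∈ S, qs i).natDegree ≤ h.natDegree + 1 := by
      intro q1 hq1
      have := prod_deg Finset.univ hs (Function.update qs i₀ q1) (fun i _ => hne i)
        (fun i _ => by
          by_cases hi : i = i₀
          · subst hi; simpa using hq1
          · simpa [hi] using (hdec i).2)
        (fun i _ j _ => hoddone i j)
      rw [← Finset.mul_prod_erase _ (Function.update qs i₀ q1) (Finset.mem_univ i₀),
        Function.update_self, ← eh] at this
      rw [← hS] at this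
      have hcongr : ∏ i ∈ S, Function.update qs i₀ q1 i = ∏ i ∈ S, qs i :=
        Finset.prod_congr rfl (fun i hi => by
          rw [Function.update_of_ne (Finset.ne_of_mem_erase hi)])
      rwa [hcongr] at this
    obtain ⟨t1, t2⟩ := two_factor v (hs i₀) (qs i₀) (ρs i₀) (∏ i ∈ S, hs i) (∏ i ∈ S, qs i)
      (∏ i ∈ S, hs i - (∏ i ∈ S, qs i) ^ 2) h q ρ a b (r - a) hc ha.symm hb.symm
      (by rw [← hr]; norm_num) eh' eq' eρ (hdec i₀) p (by ring) hdeg hgt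
    refine ⟨?_, t2⟩
    rw [t1, eh', (gaussV v).map_mul, ← ha, ← hb, ← hr]
    norm_cast
    ring
end

section
/- Let h ∈ K̄[z] be nonzero, α ∈ K̄, β ∈ K̄× and b := v(β). Assume that the number of roots ζ of h in K̄, counted with multiplicity, satisfying v(ζ − α) > b is odd, or that the number of such roots satisfying v(ζ − α) ≥ b is odd. Then every part-square decomposition h(βz + α) = q² + ρ satisfies v(ρ) ≤ v(h(βz + α)); equivalently, the trivial decomposition h(βz + α) = 0² + h(βz + α) is good. -/
open Polynomial

/-- `i` is the extremal index (first for `ε = 1`, last for `ε = -1`) at which the minimal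
coefficient valuation `a` is attained. -/
def ExtAt {F : Type*} [Field F] (v : AddValuation F (WithTop ℚ)) (ε : ℤ) (f : F[X])
    (i : ℕ) (a : WithTop ℚ) : Prop :=
  a ≠ ⊤ ∧ v (f.coeff i) = a ∧ (∀ j, a ≤ v (f.coeff j)) ∧
    ∀ j : ℕ, ε * (j : ℤ) < ε * (i : ℤ) → a < v (f.coeff j)

theorem add_lt_add_aux1 {a b c d : WithTop ℚ} (hb : b ≠ ⊤) (h1 : a < c)
    (h2 : b ≤ d) : a + b < c + d :=
  lt_of_lt_of_le (WithTop.add_lt_add_right hb h1) (by gcongr)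

theorem add_lt_add_aux2 {a b c d : WithTop ℚ} (ha : a ≠ ⊤) (h1 : a ≤ c)
    (h2 : b < d) : a + b < c + d :=
  lt_of_lt_of_le (WithTop.add_lt_add_left ha h2) (by gcongr)

theorem val_add_eq_aux {F : Type*} [Field F] (v : AddValuation F (WithTop ℚ)) {x y : F}
    (h : v x < v y) : v (x + y) = v x :=
  AddValuation.map_add_eq_of_lt_left v h

theorem ExtAt.mul {F : Type*} [Field F] {v : AddValuation F (WithTop ℚ)} {ε : ℤ}
    (hε : ε = 1 ∨ ε = -1) {f g : F[X]} {i j : ℕ} {a b : WithTop ℚ}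
    (hf : ExtAt v ε f i a) (hg : ExtAt v ε g j b) : ExtAt v ε (f * g) (i + j) (a + b) := by
  obtain ⟨ha, hfi, hfa, hfl⟩ := hf
  obtain ⟨hb, hgj, hgb, hgl⟩ := hg
  have key : ∀ s t : ℕ, (ε * (s : ℤ) < ε * (i : ℤ) ∨ ε * (t : ℤ) < ε * (j : ℤ)) →
      a + b < v (f.coeff s * g.coeff t) := by
    intro s t hst
    rw [AddValuation.map_mul]
    rcases hst with h | h
    · exact add_lt_add_aux1 hb (hfl s h) (hgb t)
    · exact add_lt_add_aux2 ha (hfa s) (hgl t h)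
  have hab : a + b ≠ ⊤ := by
    rw [Ne, WithTop.add_eq_top]; tauto
  refine ⟨hab, ?_, ?_, ?_⟩
  · rw [coeff_mul, ← Finset.add_sum_erase _ _
      (show (i, j) ∈ Finset.HasAntidiagonal.antidiagonal (i + j) by
        rw [Finset.HasAntidiagonal.mem_antidiagonal])]
    have h1 : v (f.coeff i * g.coeff j) = a + b := by rw [AddValuation.map_mul, hfi, hgj]
    rw [val_add_eq_aux v, h1]
    rw [h1]
    refine AddValuation.map_lt_sum v hab ?_
    rintro ⟨s, t⟩ hst
    simp only [Finset.mem_erase, Finset.HasAntidiagonal.mem_antidiagonal, ne_eq, Prod.mk.injEq] at hst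
    apply key
    rcases hε with rfl | rfl <;> omega
  · intro k
    rw [coeff_mul]
    refine AddValuation.map_le_sum v ?_
    rintro ⟨s, t⟩ -
    rw [AddValuation.map_mul]
    exact add_le_add (hfa s) (hgb t)
  · intro k hk
    rw [coeff_mul]
    refine AddValuation.map_lt_sum v hab ?_
    rintro ⟨s, t⟩ hst
    simp only [Finset.HasAntidiagonal.mem_antidiagonal] at hst
    apply key
    rcases hε with rfl | rfl <;> omega

theorem ExtAt.unique {F : Type*} [Field F] {v : AddValuation F (WithTop ℚ)} {ε : ℤ}
    (hε : ε = 1 ∨ ε = -1) {f : F[X]} {i j : ℕ} {a b : WithTop ℚ}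
    (hf : ExtAt v ε f i a) (hg : ExtAt v ε f j b) : i = j := by
  obtain ⟨ha, hfi, hfa, hfl⟩ := hf
  obtain ⟨hb, hgj, hgb, hgl⟩ := hg
  have hab : a = b := le_antisymm (hgj ▸ hfa j) (hfi ▸ hgb i)
  subst hab
  by_contra hne
  have : ε * (i : ℤ) < ε * (j : ℤ) ∨ ε * (j : ℤ) < ε * (i : ℤ) := by
    rcases hε with rfl | rfl <;> omega
  rcases this with h | h
  · exact (hgl i h).ne' hfi
  · exact (hfl j h).ne' hgj

theorem ExtAt.gaussVal_eq {F : Type*} [Field F] {v : AddValuation F (WithTop ℚ)} {ε : ℤ}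
    {f : F[X]} {i : ℕ} {a : WithTop ℚ} (hf : ExtAt v ε f i a) : gaussVal v f = a := by
  obtain ⟨ha, hfi, hfa, hfl⟩ := hf
  apply le_antisymm
  · rw [← hfi]
    refine Finset.inf_le (f := fun i => v (f.coeff i)) ?_
    rw [mem_support_iff]
    intro h0
    rw [h0, AddValuation.map_zero] at hfi
    exact ha hfi.symm
  · exact Finset.le_inf fun j _ => hfa j

theorem gaussVal_le_coeff {F : Type*} [Field F] (v : AddValuation F (WithTop ℚ))
    (f : F[X]) (j : ℕ) : gaussVal v f ≤ v (f.coeff j) := by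
  by_cases h : f.coeff j = 0
  · rw [h, AddValuation.map_zero]; exact le_top
  · exact Finset.inf_le (f := fun i => v (f.coeff i)) (mem_support_iff.2 h)

theorem ExtAt.sub {F : Type*} [Field F] {v : AddValuation F (WithTop ℚ)} {ε : ℤ}
    {f r : F[X]} {i : ℕ} {a : WithTop ℚ} (hf : ExtAt v ε f i a)
    (hr : ∀ j, a < v (r.coeff j)) : ExtAt v ε (f - r) i a := by
  obtain ⟨ha, hfi, hfa, hfl⟩ := hf
  refine ⟨ha, ?_, ?_, ?_⟩
  · rw [coeff_sub, sub_eq_add_neg, val_add_eq_aux v, hfi]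
    rw [AddValuation.map_neg, hfi]; exact hr i
  · intro j
    rw [coeff_sub]
    exact AddValuation.map_le_sub v (hfa j) (hr j).le
  · intro j hj
    rw [coeff_sub]
    exact lt_of_lt_of_le (lt_min (hfl j hj) (hr j)) (AddValuation.map_sub v _ _)

/-- The root-counting predicate. -/
def cntP {F : Type*} [Field F] (v : AddValuation F (WithTop ℚ)) (ε : ℤ) (α β ζ : F) : Prop :=
  if ε = 1 then v β < v (ζ - α) else v β ≤ v (ζ - α)

theorem ExtAt.C {F : Type*} [Field F] (v : AddValuation F (WithTop ℚ)) {ε : ℤ}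
    (hε : ε = 1 ∨ ε = -1) {c : F} (hc : c ≠ 0) : ExtAt v ε (Polynomial.C c) 0 (v c) := by
  have h0 : v c ≠ ⊤ := by rwa [Ne, AddValuation.top_iff]
  refine ⟨h0, by simp, ?_, ?_⟩
  · intro j
    rw [coeff_C]; split_ifs
    · exact le_rfl
    · rw [AddValuation.map_zero]; exact le_top
  · intro j hj
    have : j ≠ 0 := by rintro rfl; simp at hj
    rw [coeff_C, if_neg this, AddValuation.map_zero]
    exact lt_top_iff_ne_top.2 h0

open Classical in
theorem ExtAt.linear {F : Type*} [Field F] (v : AddValuation F (WithTop ℚ)) {ε : ℤ}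
    (hε : ε = 1 ∨ ε = -1) (α β ζ : F) (hβ : β ≠ 0) :
    ExtAt v ε (Polynomial.C β * X + Polynomial.C (α - ζ)) (if cntP v ε α β ζ then 1 else 0)
      (min (v β) (v (ζ - α))) := by
  have hb : v β ≠ ⊤ := by rwa [Ne, AddValuation.top_iff]
  have hm : min (v β) (v (ζ - α)) ≠ ⊤ := ne_top_of_le_ne_top hb (min_le_left _ _)
  set f := Polynomial.C β * X + Polynomial.C (α - ζ) with hf
  have c0 : v (f.coeff 0) = v (ζ - α) := by
    rw [AddValuation.map_sub_swap]; simp [hf]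
  have c1 : v (f.coeff 1) = v β := by simp [hf, coeff_C]
  have c2 : ∀ j, v (f.coeff (j + 2)) = ⊤ := by
    intro j; simp [hf, coeff_C, coeff_X]
  refine ⟨hm, ?_, ?_, ?_⟩
  · unfold cntP
    rcases hε with rfl | rfl
    · by_cases h : v β < v (ζ - α)
      · simp [h, c1, h.le]
      · simp [h, c0, not_lt.1 h]
    · by_cases h : v β ≤ v (ζ - α)
      · simp [h, c1]
      · simp [h, c0, (not_le.1 h).le]
  · intro j
    match j with
    | 0 => rw [c0]; exact min_le_right _ _
    | 1 => rw [c1]; exact min_le_left _ _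
    | j + 2 => rw [c2]; exact le_top
  · intro j hj
    match j with
    | 0 =>
      rw [c0]
      unfold cntP at hj
      rcases hε with rfl | rfl
      · by_cases h : v β < v (ζ - α)
        · simp [h]
        · simp [h] at hj
      · split_ifs at hj <;> simp at hj
    | 1 =>
      rw [c1]
      unfold cntP at hj
      rcases hε with rfl | rfl
      · split_ifs at hj <;> simp at hj
      · by_cases h : v β ≤ v (ζ - α)
        · simp [h] at hj
        · simp [not_le.1 h]
    | j + 2 => rw [c2]; exact lt_top_iff_ne_top.2 hm

open Classical in
theorem ExtAt.exists_comp {F : Type*} [Field F] [IsAlgClosed F]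
    (v : AddValuation F (WithTop ℚ)) {ε : ℤ}
    (hε : ε = 1 ∨ ε = -1) (α β : F) (hβ : β ≠ 0) (h : F[X]) (hh : h ≠ 0) :
    ∃ a, ExtAt v ε (h.comp (Polynomial.C β * X + Polynomial.C α))
      (Multiset.card (h.roots.filter fun ζ => cntP v ε α β ζ)) a := by
  have hp := (IsAlgClosed.splits h).eq_prod_roots
  have main : ∀ (c : F) (s : Multiset F), c ≠ 0 → ∃ a, ExtAt v ε
      ((Polynomial.C c * (s.map fun ζ => X - Polynomial.C ζ).prod).comp
        (Polynomial.C β * X + Polynomial.C α))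
      (Multiset.card (s.filter fun ζ => cntP v ε α β ζ)) a := by
    intro c s hc
    induction s using Multiset.induction_on with
    | empty => exact ⟨v c, by simpa using ExtAt.C v hε hc⟩
    | cons ζ s ih =>
      obtain ⟨a, ha⟩ := ih
      have hl := (ExtAt.linear v hε α β ζ hβ).mul hε ha
      refine ⟨min (v β) (v (ζ - α)) + a, ?_⟩
      · convert hl using 1
        · simp only [Multiset.map_cons, Multiset.prod_cons, mul_comp, C_comp, sub_comp, X_comp,
            C_sub]
          ring
        · rw [Multiset.filter_cons, Multiset.card_add]
          split_ifs <;> simp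
  have := main h.leadingCoeff h.roots (leadingCoeff_ne_zero.2 hh)
  rwa [← hp] at this

theorem psd_bound {F : Type*} [Field F] [IsAlgClosed F]
    (v : AddValuation F (WithTop ℚ)) {ε : ℤ} (hε : ε = 1 ∨ ε = -1) {g q ρ : F[X]} {i : ℕ}
    {a : WithTop ℚ} (hg : ExtAt v ε g i a) (hi : Odd i) (hq : g = q ^ 2 + ρ) :
    gaussVal v ρ ≤ gaussVal v g := by
  by_contra hlt
  rw [not_le, hg.gaussVal_eq] at hlt
  have hs := hg.sub (r := ρ) fun j => hlt.trans_le (gaussVal_le_coeff v ρ j)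
  have he : g - ρ = q * q := by rw [hq]; ring
  rw [he] at hs
  have hq0 : q ≠ 0 := by
    rintro rfl
    have := hs.2.1
    simp at this
    exact hs.1 this.symm
  obtain ⟨b, hb⟩ := ExtAt.exists_comp v hε 0 1 one_ne_zero q hq0
  simp only [map_one, map_zero, one_mul, add_zero, comp_X] at hb
  have := hs.unique hε (hb.mul hε hb)
  rw [this] at hi
  exact (Nat.not_odd_iff_even.2 ⟨_, rfl⟩) hi

/-- If the number of roots `ζ` of `h` (with multiplicity) with
`v (ζ − α) > v β` is odd, or the number with `v (ζ − α) ≥ v β` is odd, then every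
part-square decomposition of `h(βz + α)` satisfies `v ρ ≤ v (h(βz + α))`; equivalently,
the trivial decomposition `h(βz+α) = 0² + h(βz+α)` is good. -/
theorem stmt9 {Kbar : Type*} [Field Kbar] [IsAlgClosed Kbar]
    (v : AddValuation Kbar (WithTop ℚ)) (hchar : (2 : Kbar) ≠ 0)
    (h : Kbar[X]) (hh : h ≠ 0) (α β : Kbar) (hβ : β ≠ 0)
    (hodd : Odd (Multiset.card (h.roots.filter fun ζ => v β < v (ζ - α))) ∨
            Odd (Multiset.card (h.roots.filter fun ζ => v β ≤ v (ζ - α)))) :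
    (∀ q ρ : Kbar[X], IsPSD (h.comp (C β * X + C α)) q ρ →
      gaussVal v ρ ≤ gaussVal v (h.comp (C β * X + C α))) ∧
    IsGoodPSD v (h.comp (C β * X + C α)) 0 (h.comp (C β * X + C α)) := by
  classical
  have key : ∀ q ρ : Kbar[X], IsPSD (h.comp (C β * X + C α)) q ρ →
      gaussVal v ρ ≤ gaussVal v (h.comp (C β * X + C α)) := by
    intro q ρ hq
    rcases hodd with ho | ho
    · obtain ⟨a, ha⟩ := ExtAt.exists_comp v (ε := 1) (Or.inl rfl) α β hβ h hh
      refine psd_bound v (Or.inl rfl) ha ?_ hq.1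
      convert ho using 2
      exact Multiset.filter_congr fun ζ _ => by simp [cntP]
    · obtain ⟨a, ha⟩ := ExtAt.exists_comp v (ε := -1) (Or.inr rfl) α β hβ h hh
      refine psd_bound v (Or.inr rfl) ha ?_ hq.1
      convert ho using 2
      exact Multiset.filter_congr fun ζ _ => by simp [cntP]
  refine ⟨key, ⟨by simp, by simp⟩, ?_⟩
  rcases le_or_gt (gaussVal v (h.comp (C β * X + C α)) + (v 2 + v 2))
    (gaussVal v (h.comp (C β * X + C α))) with h1 | h1
  · exact Or.inl h1
  · exact Or.inr ⟨h1, key⟩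
end
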